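/- Let $m$ be a probability measure on $\mathbb{R}$ with CDF $F$. The condition $\int_{\mathbb{R}} |x|\,m(dx) < +\infty$ (finite first moment) is equivalent to $\int_{\mathbb{R}} F(x)(1-F(x))\,dx < +\infty$. -/

import Mathlib

open MeasureTheory Set
open scoped ENNReal

/-- The cumulative distribution function of a measure on `ℝ`. -/
noncomputable def cdfOf (m : Measure ℝ) (x : ℝ) : ℝ := (m (Iic x)).toReal

/-!
Write `F` for the distribution function of a finite measure `m`. By Tonelli, integrating
`F x * (m univ - F x) = (m.prod m) {(y, z) | y ≤ x < z}` over `x` gives the integral of the positive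
part of `z - y` under `m.prod m`, which by symmetry is half the integral of `|z - y|`. For a finite
measure, `z - y` is integrable under `m.prod m` if and only if the identity is integrable under `m`:
by Fubini, some section `z ↦ z - y` is integrable, and it differs from the identity by a constant.
-/

theorem lintegral_measure_Iic_mul_measure_Ioi {α : Type*} [LinearOrder α] [TopologicalSpace α]
    [OrderClosedTopology α] [SecondCountableTopology α] [MeasurableSpace α] [OpensMeasurableSpace α]
    (μ ν ρ : Measure α) [SFinite μ] [SFinite ν] [SFinite ρ] :
    ∫⁻ x, μ (Iic x) * ν (Ioi x) ∂ρ = ∫⁻ p, ρ (Ico p.1 p.2) ∂(μ.prod ν) := by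
  let S : Set (α × α × α) := {q | q.2.1 ≤ q.1 ∧ q.1 < q.2.2}
  have measurableSet_S : MeasurableSet S :=
    (measurableSet_le (by fun_prop) (by fun_prop)).inter
      (measurableSet_lt (by fun_prop) (by fun_prop))
  calc ∫⁻ x, μ (Iic x) * ν (Ioi x) ∂ρ
      = ∫⁻ x, μ.prod ν (Iic x ×ˢ Ioi x) ∂ρ := by simp only [Measure.prod_prod]
    _ = ρ.prod (μ.prod ν) S := (Measure.prod_apply measurableSet_S).symm
    _ = ∫⁻ p, ρ (Ico p.1 p.2) ∂(μ.prod ν) := Measure.prod_apply_symm measurableSet_S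

theorem ofReal_abs_eq_ofReal_add_ofReal_neg (x : ℝ) :
    ENNReal.ofReal |x| = ENNReal.ofReal x + ENNReal.ofReal (-x) := by
  rcases le_total 0 x with hx | hx
  · rw [abs_of_nonneg hx, ENNReal.ofReal_of_nonpos (neg_nonpos.2 hx), add_zero]
  · rw [abs_of_nonpos hx, ENNReal.ofReal_of_nonpos hx, zero_add]

section Integrable

variable {α β E : Type*} [MeasurableSpace α] [MeasurableSpace β] [NormedAddCommGroup E]

theorem lintegral_ofReal_abs_lt_top_iff_integrable {μ : Measure α} {f : α → ℝ}
    (hf : AEStronglyMeasurable f μ) :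
    ∫⁻ a, ENNReal.ofReal |f a| ∂μ < ⊤ ↔ Integrable f μ :=
  (hasFiniteIntegral_iff_norm f).symm.trans (and_iff_right hf).symm

theorem integrable_of_integrable_sub_prod {μ : Measure α} [NeZero μ] [SFinite μ]
    {ν : Measure β} [IsFiniteMeasure ν] {f : α → E} {g : β → E}
    (h : Integrable (fun p : α × β ↦ g p.2 - f p.1) (μ.prod ν)) : Integrable g ν := by
  obtain ⟨a, ha⟩ := h.prod_right_ae.exists
  simpa only [Pi.add_def, sub_add_cancel] using ha.add (integrable_const (f a))

theorem integrable_sub_prod_self_iff {μ : Measure α} [IsFiniteMeasure μ] {f : α → E} :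
    Integrable (fun p : α × α ↦ f p.2 - f p.1) (μ.prod μ) ↔ Integrable f μ := by
  rcases eq_zero_or_neZero μ with rfl | _
  · simp
  · exact ⟨integrable_of_integrable_sub_prod, fun h ↦ (h.comp_snd μ).sub (h.comp_fst μ)⟩

theorem lintegral_ofReal_abs_sub_prod_self (μ : Measure α) [SFinite μ] {f : α → ℝ}
    (hf : AEMeasurable f μ) :
    ∫⁻ p, ENNReal.ofReal |f p.2 - f p.1| ∂(μ.prod μ) =
      2 * ∫⁻ p, ENNReal.ofReal (f p.2 - f p.1) ∂(μ.prod μ) := by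
  have swap : ∫⁻ p, ENNReal.ofReal (f p.1 - f p.2) ∂(μ.prod μ) =
      ∫⁻ p, ENNReal.ofReal (f p.2 - f p.1) ∂(μ.prod μ) :=
    lintegral_prod_swap fun p : α × α ↦ ENNReal.ofReal (f p.2 - f p.1)
  simp only [ofReal_abs_eq_ofReal_add_ofReal_neg, neg_sub]
  rw [lintegral_add_left' (by fun_prop), swap, two_mul]

end Integrable

theorem ofReal_cdfOf_mul_sub_cdfOf (m : Measure ℝ) [IsFiniteMeasure m] (x : ℝ) :
    ENNReal.ofReal (cdfOf m x * (m.real univ - cdfOf m x)) = m (Iic x) * m (Ioi x) := by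
  have tail : m.real univ - cdfOf m x = m.real (Ioi x) := by
    rw [← compl_Iic, measureReal_compl measurableSet_Iic, cdfOf, measureReal_def m (Iic x)]
  rw [tail, cdfOf, ENNReal.ofReal_mul ENNReal.toReal_nonneg, ofReal_measureReal,
    ENNReal.ofReal_toReal (measure_ne_top m _)]

theorem two_mul_lintegral_cdfOf_mul_sub_cdfOf (m : Measure ℝ) [IsFiniteMeasure m] :
    2 * ∫⁻ x, ENNReal.ofReal (cdfOf m x * (m.real univ - cdfOf m x)) =
      ∫⁻ p, ENNReal.ofReal |p.2 - p.1| ∂(m.prod m) := by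
  simp only [ofReal_cdfOf_mul_sub_cdfOf, lintegral_measure_Iic_mul_measure_Ioi, Real.volume_Ico]
  exact (lintegral_ofReal_abs_sub_prod_self m aemeasurable_id).symm

theorem stmt4_general (m : Measure ℝ) [IsFiniteMeasure m] :
    (∫⁻ x, ENNReal.ofReal |x| ∂m) < ⊤ ↔
      (∫⁻ x, ENNReal.ofReal (cdfOf m x * (m.real univ - cdfOf m x))) < ⊤ :=
  calc (∫⁻ x, ENNReal.ofReal |x| ∂m) < ⊤
      ↔ Integrable (fun x ↦ x) m :=
        lintegral_ofReal_abs_lt_top_iff_integrable (by fun_prop)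
    _ ↔ Integrable (fun p : ℝ × ℝ ↦ p.2 - p.1) (m.prod m) :=
        integrable_sub_prod_self_iff.symm
    _ ↔ ∫⁻ p, ENNReal.ofReal |p.2 - p.1| ∂(m.prod m) < ⊤ :=
        (lintegral_ofReal_abs_lt_top_iff_integrable (by fun_prop)).symm
    _ ↔ (∫⁻ x, ENNReal.ofReal (cdfOf m x * (m.real univ - cdfOf m x))) < ⊤ := by
        rw [← two_mul_lintegral_cdfOf_mul_sub_cdfOf, two_mul, ENNReal.add_lt_top, and_self_iff]

theorem stmt4 (m : Measure ℝ) [IsProbabilityMeasure m] :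
    (∫⁻ x, ENNReal.ofReal |x| ∂m) < ⊤ ↔
      (∫⁻ x, ENNReal.ofReal (cdfOf m x * (1 - cdfOf m x))) < ⊤ := by
  simpa only [probReal_univ] using stmt4_general m
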